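/- Let n ≥ 1 and 0 ≤ r ≤ n. Let U, U_r ∈ ℂ^{n×n} be unitary matrices all of whose eigenvalues have arguments in (−π/2,π/2), and suppose at most r eigenvalues of U_r (counted with multiplicity) are different from 1. Let U = Vᴴ diag(e^{iθ₁},…,e^{iθₙ}) V be a unitary diagonalization with |θ₁| ≥ ⋯ ≥ |θₙ|, θ_k ∈ (−π/2,π/2), and set Û_r = Vᴴ diag(e^{iθ₁},…,e^{iθ_r},1,…,1) V. Then the vector of absolute values of the eigenvalue arguments of UᴴÛ_r is weakly submajorized by the vector of absolute values of the eigenvalue arguments of UᴴU_r: for every ℓ ∈ {1,…,n}, the sum of the ℓ largest absolute eigenvalue arguments of UᴴÛ_r is at most the sum of the ℓ largest absolute eigenvalue arguments of UᴴU_r. -/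

import Mathlib

noncomputable section

open Matrix
open scoped Classical ComplexOrder

namespace LowPrank

variable {n : ℕ}

/-- A matrix is sectorial if its numerical range does not contain `0`
(`star x ⬝ᵥ x = 1` encodes `‖x‖₂ = 1`). -/
def IsSectorial (A : Matrix (Fin n) (Fin n) ℂ) : Prop :=
  ∀ x : Fin n → ℂ, star x ⬝ᵥ x = 1 → star x ⬝ᵥ A.mulVec x ≠ 0

/-- The diagonal unitary matrix `diag (e^{iφ₁}, …, e^{iφₙ})`. -/
def phaseDiag (φ : Fin n → ℝ) : Matrix (Fin n) (Fin n) ℂ :=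
  Matrix.diagonal fun k => Complex.exp (Complex.I * (φ k : ℂ))

/-- `A = Tᴴ diag (e^{iφ₁}, …, e^{iφₙ}) T` with `T` invertible. -/
def IsSectorialDecomp (A T : Matrix (Fin n) (Fin n) ℂ) (φ : Fin n → ℝ) : Prop :=
  IsUnit T ∧ A = Tᴴ * phaseDiag φ * T

/-- `φ` is the (sorted, normalized) vector of canonical phases of `A`:
nonincreasing, spread `< π`, midpoint of the range in `(-π, π]`, and realizing a
sectorial decomposition of `A`. -/
def IsCanonicalPhases (A : Matrix (Fin n) (Fin n) ℂ) (φ : Fin n → ℝ) : Prop :=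
  Antitone φ ∧ (∀ i j, φ i - φ j < Real.pi) ∧
    (-Real.pi < ((⨆ i, φ i) + ⨅ i, φ i) / 2) ∧ (((⨆ i, φ i) + ⨅ i, φ i) / 2 ≤ Real.pi) ∧
    ∃ T, IsSectorialDecomp A T φ

/-- The canonical phases `φ₁(A) ≥ ⋯ ≥ φₙ(A)` of a sectorial matrix
(`phases A k` is the `(k+1)`-st largest canonical phase). -/
noncomputable def phases (A : Matrix (Fin n) (Fin n) ℂ) : Fin n → ℝ :=
  if h : ∃ φ, IsCanonicalPhases A φ then h.choose else 0

/-- The phase-rank: the number of nonzero canonical phases. -/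
noncomputable def prank (A : Matrix (Fin n) (Fin n) ℂ) : ℕ :=
  {k : Fin n | phases A k ≠ 0}.ncard

/-- Positive-imaginary: sectorial with all canonical phases in `[0, π)`. -/
def PositiveImaginary (A : Matrix (Fin n) (Fin n) ℂ) : Prop :=
  IsSectorial A ∧ ∀ k, phases A k ∈ Set.Ico 0 Real.pi

/-- Symmetric gauge function. -/
structure IsSymmetricGauge (Φ : (Fin n → ℝ) → ℝ) : Prop where
  pos : ∀ x, x ≠ 0 → 0 < Φ x
  smul : ∀ (ρ : ℝ) (x), Φ (ρ • x) = |ρ| * Φ x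
  subadd : ∀ x y, Φ (x + y) ≤ Φ x + Φ y
  perm : ∀ (σ : Equiv.Perm (Fin n)) (x), Φ (x ∘ σ) = Φ x
  abs : ∀ x, Φ (fun k => |x k|) = Φ x

/-- The set `S_p(A, r)` of `r`-half-truncations of `A`. -/
def Sp (A : Matrix (Fin n) (Fin n) ℂ) (r : ℕ) : Set (Matrix (Fin n) (Fin n) ℂ) :=
  {E | ∃ T, IsSectorialDecomp A T (phases A) ∧
    E = Tᴴ * Matrix.diagonal (fun k : Fin n =>
      if (k : ℕ) < r then Complex.exp (Complex.I * ((phases A k / 2 : ℝ) : ℂ)) else 1) * T}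


/-- The sum of the `m` largest entries of a multiset of reals. -/
noncomputable def sumLargest (s : Multiset ℝ) (m : ℕ) : ℝ :=
  ((s.sort (· ≤ ·)).reverse.take m).sum

/-!
If `U_r x = x` then `UᴴU_r` and `Uᴴ` have the same quadratic form at `x`, with real part that of
`⟨x, U x⟩`. Hence on the span of the eigenvectors of `U` with `Re ≤ t`, intersected with the fixed
space of `U_r`, the form of `UᴴU_r` has real part at most `t ‖x‖²`, and counting dimensions shows
that passing from `U` to `UᴴU_r` destroys at most `rank (U_r - 1)` eigenvalues with `Re ≤ t`. For
`t = cos c` these are the eigenvalues with `|arg| ≥ c`. The truncation `Û_r` destroys as many as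
possible for every `c` simultaneously, so the sorted lists of `|arg|` compare entry by entry.
-/

section SortedLists

theorem le_getElem_iff_lt_countP {α : Type*} [LinearOrder α] {l : List α}
    (hl : l.Pairwise (· ≥ ·)) {j : ℕ} (hj : j < l.length) (c : α) :
    c ≤ l[j] ↔ j < l.countP (c ≤ ·) := by
  induction l generalizing j with
  | nil => simp at hj
  | cons a l ih =>
    obtain ⟨ha, hl⟩ := List.pairwise_cons.mp hl
    by_cases hca : c ≤ a
    · cases j with
      | zero => simp [hca]
      | succ j => simpa [hca] using ih hl (Nat.lt_of_succ_lt_succ hj)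
    · have hlt (x) (hx : x ∈ a :: l) : ¬ c ≤ x := by
        rcases List.mem_cons.mp hx with rfl | hx
        · exact hca
        · exact fun hcx => hca (hcx.trans (ha x hx))
      have hzero : (a :: l).countP (c ≤ ·) = 0 := List.countP_eq_zero.mpr (by simpa using hlt)
      simp only [hzero, Nat.not_lt_zero, iff_false]
      exact hlt _ (List.getElem_mem hj)

theorem sumLargest_le_sumLargest_of_countP_le {s t : Multiset ℝ} (hcard : s.card = t.card)
    (h : ∀ c, s.countP (c ≤ ·) ≤ t.countP (c ≤ ·)) (m : ℕ) : sumLargest s m ≤ sumLargest t m := by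
  have hsorted (s : Multiset ℝ) : (s.sort (· ≤ ·)).reverse.Pairwise (· ≥ ·) :=
    List.pairwise_reverse.mpr (s.pairwise_sort _)
  have hcount (s : Multiset ℝ) (c : ℝ) :
      (s.sort (· ≤ ·)).reverse.countP (c ≤ ·) = s.countP (c ≤ ·) := by
    rw [List.countP_reverse, ← Multiset.coe_countP, Multiset.sort_eq]
  refine (List.forall₂_take m (List.forall₂_iff_get.mpr ⟨by simpa using hcard, ?_⟩)).sum_le_sum
  intro j hs ht
  simp only [List.get_eq_getElem]
  rw [le_getElem_iff_lt_countP (hsorted t) ht, hcount]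
  refine lt_of_lt_of_le ?_ (h _)
  rw [← hcount, ← le_getElem_iff_lt_countP (hsorted s) hs]

end SortedLists

section SpectralTheorem

open Module.End

theorem exists_orthonormalBasis_eigenvectors_of_commute {𝕜 E : Type*} [RCLike 𝕜]
    [NormedAddCommGroup E] [InnerProductSpace 𝕜 E] [FiniteDimensional 𝕜 E]
    {A B : E →ₗ[𝕜] E} (hA : A.IsSymmetric) (hB : B.IsSymmetric) (hAB : Commute A B) :
    ∃ (b : OrthonormalBasis (Fin (Module.finrank 𝕜 E)) 𝕜 E) (α β : Fin (Module.finrank 𝕜 E) → 𝕜),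
      ∀ i, A (b i) = α i • b i ∧ B (b i) = β i • b i := by
  let V (i : 𝕜 × 𝕜) : Submodule 𝕜 E := eigenspace A i.2 ⊓ eigenspace B i.1
  have hortho := LinearMap.IsSymmetric.orthogonalFamily_eigenspace_inf_eigenspace hA hB
  have hortho' : OrthogonalFamily 𝕜 (fun i : {i // V i ≠ ⊥} => V i) fun i => (V i).subtypeₗᵢ :=
    hortho.comp Subtype.val_injective
  have hint : DirectSum.IsInternal fun i : {i // V i ≠ ⊥} => V i :=
    DirectSum.isInternal_ne_bot_iff.mpr
      (LinearMap.IsSymmetric.directSum_isInternal_of_commute hA hB hAB)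
  let := hortho.independent.fintypeNeBotOfFiniteDimensional
  let idx (i) : {i // V i ≠ ⊥} := hint.subordinateOrthonormalBasisIndex rfl i hortho'
  have hmem (i) : hint.subordinateOrthonormalBasis rfl hortho' i ∈ V (idx i) :=
    hint.subordinateOrthonormalBasis_subordinate rfl i hortho'
  exact ⟨hint.subordinateOrthonormalBasis rfl hortho', fun i => (idx i).1.2, fun i => (idx i).1.1,
    fun i => ⟨mem_eigenspace_iff.mp (hmem i).1, mem_eigenspace_iff.mp (hmem i).2⟩⟩

open ComplexStarModule in
theorem exists_orthonormalBasis_eigenvectors_of_isStarNormal {E : Type*}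
    [NormedAddCommGroup E] [InnerProductSpace ℂ E] [FiniteDimensional ℂ E]
    (T : E →ₗ[ℂ] E) [IsStarNormal T] :
    ∃ (b : OrthonormalBasis (Fin (Module.finrank ℂ E)) ℂ E) (w : Fin (Module.finrank ℂ E) → ℂ),
      ∀ i, T (b i) = w i • b i := by
  obtain ⟨b, α, β, hb⟩ := exists_orthonormalBasis_eigenvectors_of_commute
    ((LinearMap.isSymmetric_iff_isSelfAdjoint _).mpr (ℜ T).2)
    ((LinearMap.isSymmetric_iff_isSelfAdjoint _).mpr (ℑ T).2) (Commute.realPart_imaginaryPart T)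
  refine ⟨b, fun i => α i + Complex.I * β i, fun i => ?_⟩
  conv_lhs => rw [← realPart_add_I_smul_imaginaryPart T]
  rw [LinearMap.add_apply, LinearMap.smul_apply, (hb i).1, (hb i).2, smul_smul, add_smul]

end SpectralTheorem

variable {ι : Type*} [Fintype ι]

/-- The vectors whose coordinates `Q *ᵥ x` are supported in `S`. For unitary `Q`, it is the span of
the eigenvectors of `Qᴴ * diagonal w * Q` indexed by `S`. -/
def coordSubspace {K : Type*} [Field K] (Q : Matrix ι ι K) (S : Finset ι) : Submodule K (ι → K) :=
  (Q.submatrix (Subtype.val : {k // k ∉ S} → ι) id).mulVecLin.ker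

theorem mem_coordSubspace {K : Type*} [Field K] {Q : Matrix ι ι K} {S : Finset ι} {x : ι → K} :
    x ∈ coordSubspace Q S ↔ ∀ k ∉ S, (Q *ᵥ x) k = 0 := by
  simp [coordSubspace, funext_iff, mulVec, dotProduct]

theorem card_le_finrank_coordSubspace {K : Type*} [Field K] (Q : Matrix ι ι K) (S : Finset ι) :
    S.card ≤ Module.finrank K (coordSubspace Q S) := by
  let L := (Q.submatrix (Subtype.val : {k // k ∉ S} → ι) id).mulVecLin
  have hrange : Module.finrank K L.range ≤ Fintype.card {k // k ∉ S} := by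
    simpa using L.range.finrank_le
  have hnullity : Module.finrank K L.range + Module.finrank K (coordSubspace Q S) =
      Fintype.card ι :=
    L.finrank_range_add_finrank_ker.trans (Module.finrank_fintype_fun_eq_card K)
  have hcompl : Fintype.card {k // k ∉ S} = Fintype.card ι - S.card := by
    simp [Fintype.card_subtype_compl]
  have := S.card_le_univ
  lia

theorem re_star_dotProduct_conjTranspose_mulVec (A : Matrix ι ι ℂ) (x : ι → ℂ) :
    (star x ⬝ᵥ Aᴴ *ᵥ x).re = (star x ⬝ᵥ A *ᵥ x).re := by
  rw [dotProduct_mulVec, ← star_mulVec, star_dotProduct, Complex.star_def, Complex.conj_re]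

variable [DecidableEq ι]

theorem coordSubspace_le_eigenspace {K : Type*} [Field K] [StarRing K] {Q : Matrix ι ι K}
    (hQ : Q ∈ unitaryGroup ι K) {S : Finset ι} {w : ι → K} {μ : K} (hw : ∀ k ∈ S, w k = μ) :
    coordSubspace Q S ≤ Module.End.eigenspace (Qᴴ * diagonal w * Q).toLin' μ := by
  intro x hx
  have hdiag : diagonal w *ᵥ Q *ᵥ x = μ • Q *ᵥ x := by
    ext k
    by_cases hk : k ∈ S
    · simp [mulVec_diagonal, hw k hk]
    · simp [mulVec_diagonal, mem_coordSubspace.mp hx k hk]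
  rw [Module.End.mem_eigenspace_iff, toLin'_apply, ← mulVec_mulVec, ← mulVec_mulVec, hdiag,
    mulVec_smul, mulVec_mulVec, ← star_eq_conjTranspose, mem_unitaryGroup_iff'.mp hQ, one_mulVec]

theorem exists_unitary_conjTranspose_mul_diagonal_mul (W : Matrix ι ι ℂ) [IsStarNormal W] :
    ∃ Q ∈ unitaryGroup ι ℂ, ∃ w : ι → ℂ, W = Qᴴ * diagonal w * Q := by
  let e := EuclideanSpace.basisFun ι ℂ
  let T := (LinearMap.toMatrixOrthonormal e).symm W
  obtain ⟨b₀, w₀, hb₀⟩ := exists_orthonormalBasis_eigenvectors_of_isStarNormal T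
  let σ : Fin (Module.finrank ℂ (EuclideanSpace ℂ ι)) ≃ ι :=
    (Fintype.equivFinOfCardEq finrank_euclideanSpace.symm).symm
  let b := b₀.reindex σ
  let w := w₀ ∘ σ.symm
  have hb (i : ι) : T (b i) = w i • b i := by simpa [b, w] using hb₀ (σ.symm i)
  have hT : LinearMap.toMatrix b.toBasis b.toBasis T = diagonal w := by
    ext i j
    rw [LinearMap.toMatrix_apply, OrthonormalBasis.coe_toBasis, hb, map_smul,
      ← OrthonormalBasis.coe_toBasis, Module.Basis.repr_self, Finsupp.smul_single, smul_eq_mul,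
      mul_one, Finsupp.single_apply, diagonal_apply]
    split_ifs <;> simp_all
  have hW : LinearMap.toMatrix e.toBasis e.toBasis T = W :=
    (LinearMap.toMatrixOrthonormal e).apply_symm_apply W
  have hQ : (b.toBasis.toMatrix e)ᴴ = e.toBasis.toMatrix b := by
    ext i j
    simp [Module.Basis.toMatrix_apply, OrthonormalBasis.repr_apply_apply, e]
  refine ⟨b.toBasis.toMatrix e, b.toMatrix_orthonormalBasis_mem_unitary e, w, ?_⟩
  rw [hQ, ← hT, ← hW]
  exact (basis_toMatrix_mul_linearMap_toMatrix_mul_basis_toMatrix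
    e.toBasis b.toBasis e.toBasis b.toBasis T).symm

theorem roots_charpoly_conjTranspose_mul_diagonal_mul {K : Type*} [Field K] [StarRing K]
    {Q : Matrix ι ι K} (hQ : Q ∈ unitaryGroup ι K) (w : ι → K) :
    (Qᴴ * diagonal w * Q).charpoly.roots = Finset.univ.val.map w := by
  rw [charpoly_mul_comm, ← Matrix.mul_assoc, ← star_eq_conjTranspose, mem_unitaryGroup_iff.mp hQ,
    Matrix.one_mul, charpoly_diagonal,
    ← Polynomial.roots_multiset_prod_X_sub_C (Finset.univ.val.map w), Multiset.map_map]
  rfl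

theorem countP_roots_charpoly_conjTranspose_mul_diagonal_mul {K : Type*} [Field K] [StarRing K]
    {Q : Matrix ι ι K} (hQ : Q ∈ unitaryGroup ι K) (w : ι → K) (p : K → Prop) [DecidablePred p] :
    (Qᴴ * diagonal w * Q).charpoly.roots.countP p = Finset.card {k | p (w k)} := by
  rw [roots_charpoly_conjTranspose_mul_diagonal_mul hQ, Multiset.countP_map]
  rfl

theorem card_roots_charpoly {K : Type*} [Field K] [IsAlgClosed K] (A : Matrix ι ι K) :
    A.charpoly.roots.card = Fintype.card ι := by
  rw [← charpoly_natDegree_eq_dim A]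
  exact (IsAlgClosed.splits _).natDegree_eq_card_roots.symm

open scoped Matrix.Norms.L2Operator in
theorem norm_eq_one_of_mem_roots_charpoly {W : Matrix ι ι ℂ} (hW : W ∈ unitaryGroup ι ℂ) {z : ℂ}
    (hz : z ∈ W.charpoly.roots) : ‖z‖ = 1 :=
  spectrum.norm_eq_one_of_unitary hW
    (mem_spectrum_of_isRoot_charpoly (Polynomial.isRoot_of_mem_roots hz))

theorem re_star_dotProduct_conjTranspose_mul_diagonal_mul_mulVec (Q : Matrix ι ι ℂ) (w x : ι → ℂ) :
    (star x ⬝ᵥ (Qᴴ * diagonal w * Q) *ᵥ x).re = ∑ k, (w k).re * ‖(Q *ᵥ x) k‖ ^ 2 := by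
  rw [← mulVec_mulVec, ← mulVec_mulVec, dotProduct_mulVec, ← star_mulVec, dotProduct,
    Complex.re_sum]
  refine Finset.sum_congr rfl fun k _ => ?_
  rw [mulVec_diagonal, mul_left_comm, Pi.star_apply, Complex.star_def, Complex.conj_mul',
    ← Complex.ofReal_pow, Complex.re_mul_ofReal]

theorem sum_norm_mulVec_sq_of_mem_unitaryGroup {Q : Matrix ι ι ℂ} (hQ : Q ∈ unitaryGroup ι ℂ)
    (x : ι → ℂ) : ∑ k, ‖(Q *ᵥ x) k‖ ^ 2 = (star x ⬝ᵥ x).re := by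
  simpa [← star_eq_conjTranspose, mem_unitaryGroup_iff'.mp hQ] using
    (re_star_dotProduct_conjTranspose_mul_diagonal_mul_mulVec Q (fun _ => 1) x).symm

section QuadraticForm

variable {Q : Matrix ι ι ℂ} {S : Finset ι} {w x : ι → ℂ} {t : ℝ}

theorem re_star_dotProduct_mulVec_le_of_mem_coordSubspace (hQ : Q ∈ unitaryGroup ι ℂ)
    (hw : ∀ k ∈ S, (w k).re ≤ t) (hx : x ∈ coordSubspace Q S) :
    (star x ⬝ᵥ (Qᴴ * diagonal w * Q) *ᵥ x).re ≤ t * (star x ⬝ᵥ x).re := by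
  rw [re_star_dotProduct_conjTranspose_mul_diagonal_mul_mulVec,
    ← sum_norm_mulVec_sq_of_mem_unitaryGroup hQ, Finset.mul_sum]
  refine Finset.sum_le_sum fun k _ => ?_
  by_cases hk : k ∈ S
  · exact mul_le_mul_of_nonneg_right (hw k hk) (sq_nonneg _)
  · simp [mem_coordSubspace.mp hx k hk]

theorem lt_re_star_dotProduct_mulVec_of_mem_coordSubspace (hQ : Q ∈ unitaryGroup ι ℂ)
    (hw : ∀ k ∈ S, t < (w k).re) (hx : x ∈ coordSubspace Q S) (hx₀ : x ≠ 0) :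
    t * (star x ⬝ᵥ x).re < (star x ⬝ᵥ (Qᴴ * diagonal w * Q) *ᵥ x).re := by
  have hQx : Q *ᵥ x ≠ 0 := fun h => hx₀ <| by
    simpa [← star_eq_conjTranspose, mem_unitaryGroup_iff'.mp hQ] using congrArg (star Q *ᵥ ·) h
  obtain ⟨k₀, hk₀⟩ := Function.ne_iff.mp hQx
  have hk₀S : k₀ ∈ S := by_contra fun h => hk₀ (mem_coordSubspace.mp hx k₀ h)
  rw [re_star_dotProduct_conjTranspose_mul_diagonal_mul_mulVec,
    ← sum_norm_mulVec_sq_of_mem_unitaryGroup hQ, Finset.mul_sum]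
  refine Finset.sum_lt_sum (fun k _ => ?_) ⟨k₀, Finset.mem_univ _, ?_⟩
  · by_cases hk : k ∈ S
    · exact mul_le_mul_of_nonneg_right (hw k hk).le (sq_nonneg _)
    · simp [mem_coordSubspace.mp hx k hk]
  · exact mul_lt_mul_of_pos_right (hw k₀ hk₀S) (pow_pos (norm_pos_iff.mpr hk₀) 2)

end QuadraticForm

theorem finrank_le_countP_re_le {W : Matrix ι ι ℂ} [IsStarNormal W] {t : ℝ}
    {p : Submodule ℂ (ι → ℂ)}
    (hp : ∀ x ∈ p, (star x ⬝ᵥ W *ᵥ x).re ≤ t * (star x ⬝ᵥ x).re) :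
    Module.finrank ℂ p ≤ W.charpoly.roots.countP (·.re ≤ t) := by
  obtain ⟨Q, hQ, w, rfl⟩ := exists_unitary_conjTranspose_mul_diagonal_mul W
  let S : Finset ι := {k | ¬ (w k).re ≤ t}
  have hdisj : Disjoint p (coordSubspace Q S) := by
    refine Submodule.disjoint_def.mpr fun x hxp hxS => by_contra fun hx₀ => ?_
    exact (lt_re_star_dotProduct_mulVec_of_mem_coordSubspace hQ (by simp [S]) hxS hx₀).not_ge
      (hp x hxp)
  have hdim : Module.finrank ℂ p + Module.finrank ℂ (coordSubspace Q S) ≤ Fintype.card ι := by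
    simpa using Submodule.finrank_add_finrank_le_of_disjoint hdisj
  have hS := card_le_finrank_coordSubspace Q S
  have hcard : Finset.card {k | (w k).re ≤ t} + S.card = Fintype.card ι :=
    Finset.card_filter_add_card_filter_not _
  rw [countP_roots_charpoly_conjTranspose_mul_diagonal_mul hQ]
  lia

theorem card_le_countP_ne_add_finrank_eigenspace (W : Matrix ι ι ℂ) [IsStarNormal W] (μ : ℂ) :
    Fintype.card ι ≤ W.charpoly.roots.countP (· ≠ μ) +
      Module.finrank ℂ (Module.End.eigenspace W.toLin' μ) := by
  obtain ⟨Q, hQ, w, rfl⟩ := exists_unitary_conjTranspose_mul_diagonal_mul W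
  let S : Finset ι := {k | w k = μ}
  have hcard : S.card + Finset.card {k | w k ≠ μ} = Fintype.card ι :=
    Finset.card_filter_add_card_filter_not _
  have hS : S.card ≤ Module.finrank ℂ (Module.End.eigenspace (Qᴴ * diagonal w * Q).toLin' μ) :=
    (card_le_finrank_coordSubspace Q S).trans <| Submodule.finrank_mono <|
      coordSubspace_le_eigenspace hQ fun k hk => (Finset.mem_filter.mp hk).2
  rw [countP_roots_charpoly_conjTranspose_mul_diagonal_mul hQ]
  lia

theorem countP_re_le_le_countP_ne_one_add_countP_re_le (U Ur : Matrix ι ι ℂ)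
    [IsStarNormal U] [IsStarNormal Ur] [IsStarNormal (Uᴴ * Ur)] (t : ℝ) :
    U.charpoly.roots.countP (·.re ≤ t) ≤
      Ur.charpoly.roots.countP (· ≠ 1) + (Uᴴ * Ur).charpoly.roots.countP (·.re ≤ t) := by
  obtain ⟨Q, hQ, w, hU⟩ := exists_unitary_conjTranspose_mul_diagonal_mul U
  let S : Finset ι := {k | (w k).re ≤ t}
  let M := coordSubspace Q S
  let E := Module.End.eigenspace Ur.toLin' 1
  have hM : U.charpoly.roots.countP (·.re ≤ t) ≤ Module.finrank ℂ M := by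
    rw [hU, countP_roots_charpoly_conjTranspose_mul_diagonal_mul hQ]
    exact card_le_finrank_coordSubspace Q S
  have hE : Fintype.card ι ≤ Ur.charpoly.roots.countP (· ≠ 1) + Module.finrank ℂ E :=
    card_le_countP_ne_add_finrank_eigenspace Ur 1
  have hinf : Module.finrank ℂ ↥(M ⊓ E) ≤ (Uᴴ * Ur).charpoly.roots.countP (·.re ≤ t) := by
    refine finrank_le_countP_re_le fun x hx => ?_
    have hfix : Ur *ᵥ x = x := by
      simpa using Module.End.mem_eigenspace_iff.mp hx.2
    rw [← mulVec_mulVec, hfix, re_star_dotProduct_conjTranspose_mulVec, hU]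
    exact re_star_dotProduct_mulVec_le_of_mem_coordSubspace hQ (by simp [S]) hx.1
  have hdim := Submodule.finrank_sup_add_finrank_inf_eq M E
  have hsup : Module.finrank ℂ ↥(M ⊔ E) ≤ Fintype.card ι := by simpa using (M ⊔ E).finrank_le
  lia

theorem le_abs_arg_iff_re_le_cos {z : ℂ} (hz : ‖z‖ = 1) {c : ℝ} (hc₀ : 0 ≤ c) (hcπ : c ≤ Real.pi) :
    c ≤ |z.arg| ↔ z.re ≤ Real.cos c := by
  have hre : z.re = Real.cos |z.arg| := by
    rw [Real.cos_abs, Complex.cos_arg (norm_pos_iff.mp (hz ▸ one_pos)), hz, div_one]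
  rw [hre, Real.strictAntiOn_cos.le_iff_ge ⟨abs_nonneg _, Complex.abs_arg_le_pi z⟩ ⟨hc₀, hcπ⟩]

/-- The multiset of absolute values of the eigenvalue arguments of `W`, with algebraic
multiplicity; arguments are taken in `(-π, π]`. -/
def absEigArgs (W : Matrix ι ι ℂ) : Multiset ℝ :=
  W.charpoly.roots.map fun z => |z.arg|

theorem card_absEigArgs (W : Matrix ι ι ℂ) : (absEigArgs W).card = Fintype.card ι := by
  rw [absEigArgs, Multiset.card_map, card_roots_charpoly]

theorem countP_le_absEigArgs_of_nonpos (W : Matrix ι ι ℂ) {c : ℝ} (hc : c ≤ 0) :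
    (absEigArgs W).countP (c ≤ ·) = Fintype.card ι := by
  rw [← card_absEigArgs W, Multiset.countP_eq_card]
  intro a ha
  obtain ⟨z, -, rfl⟩ := Multiset.mem_map.mp ha
  exact hc.trans (abs_nonneg _)

theorem countP_le_absEigArgs_of_pi_lt (W : Matrix ι ι ℂ) {c : ℝ} (hc : Real.pi < c) :
    (absEigArgs W).countP (c ≤ ·) = 0 := by
  rw [Multiset.countP_eq_zero]
  intro a ha
  obtain ⟨z, -, rfl⟩ := Multiset.mem_map.mp ha
  exact ((Complex.abs_arg_le_pi z).trans_lt hc).not_ge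

theorem countP_le_absEigArgs_eq_countP_re_le_cos {W : Matrix ι ι ℂ} (hW : W ∈ unitaryGroup ι ℂ)
    {c : ℝ} (hc₀ : 0 ≤ c) (hcπ : c ≤ Real.pi) :
    (absEigArgs W).countP (c ≤ ·) = W.charpoly.roots.countP (·.re ≤ Real.cos c) := by
  rw [absEigArgs, Multiset.countP_map, ← Multiset.countP_eq_card_filter]
  exact Multiset.countP_congr rfl fun z hz => propext <|
    le_abs_arg_iff_re_le_cos (norm_eq_one_of_mem_roots_charpoly hW hz) hc₀ hcπ

theorem countP_le_absEigArgs_le {U Ur : Matrix ι ι ℂ} (hU : U ∈ unitaryGroup ι ℂ)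
    (hUr : Ur ∈ unitaryGroup ι ℂ) (c : ℝ) :
    (absEigArgs U).countP (c ≤ ·) ≤
      Ur.charpoly.roots.countP (· ≠ 1) + (absEigArgs (Uᴴ * Ur)).countP (c ≤ ·) := by
  rcases le_or_gt c 0 with hc₀ | hc₀
  · simp only [countP_le_absEigArgs_of_nonpos _ hc₀, Nat.le_add_left]
  rcases lt_or_ge Real.pi c with hcπ | hcπ
  · simp only [countP_le_absEigArgs_of_pi_lt _ hcπ, Nat.zero_le]
  have hUUr : Uᴴ * Ur ∈ unitaryGroup ι ℂ := mul_mem (Unitary.star_mem hU) hUr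
  have := isStarNormal_of_mem_unitary hU
  have := isStarNormal_of_mem_unitary hUr
  have := isStarNormal_of_mem_unitary hUUr
  rw [countP_le_absEigArgs_eq_countP_re_le_cos hU hc₀.le hcπ,
    countP_le_absEigArgs_eq_countP_re_le_cos hUUr hc₀.le hcπ]
  exact countP_re_le_le_countP_ne_one_add_countP_re_le U Ur (Real.cos c)

theorem absEigArgs_conjTranspose_mul_diagonal_mul {V : Matrix ι ι ℂ} (hV : V ∈ unitaryGroup ι ℂ)
    (u : ι → ℂ) :
    absEigArgs (Vᴴ * diagonal u * V) = Finset.univ.val.map fun k => |(u k).arg| := by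
  rw [absEigArgs, roots_charpoly_conjTranspose_mul_diagonal_mul hV, Multiset.map_map]
  rfl

theorem abs_arg_star (z : ℂ) : |(star z).arg| = |z.arg| := by
  rw [Complex.star_def, Complex.arg_conj]
  split_ifs with h
  · rw [h]
  · exact abs_neg _

theorem absEigArgs_conjTranspose_mul_truncation {U V : Matrix ι ι ℂ} {u : ι → ℂ}
    (hU : U ∈ unitaryGroup ι ℂ) (hV : V ∈ unitaryGroup ι ℂ) (hUV : U = Vᴴ * diagonal u * V)
    (S : Finset ι) :
    absEigArgs (Uᴴ * (Vᴴ * diagonal (fun k => if k ∈ S then u k else 1) * V)) =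
      Finset.univ.val.map fun k => if k ∈ S then 0 else |(u k).arg| := by
  have hu (k : ι) : ‖u k‖ = 1 := by
    refine norm_eq_one_of_mem_roots_charpoly hU ?_
    rw [hUV, roots_charpoly_conjTranspose_mul_diagonal_mul hV]
    exact Multiset.mem_map_of_mem u (Finset.mem_univ_val k)
  have hprod : Uᴴ * (Vᴴ * diagonal (fun k => if k ∈ S then u k else 1) * V) =
      Vᴴ * diagonal (fun k => if k ∈ S then 1 else star (u k)) * V := by
    have hVV : V * Vᴴ = 1 := mem_unitaryGroup_iff.mp hV
    have hdiag : diagonal (star u) * diagonal (fun k => if k ∈ S then u k else 1) =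
        diagonal fun k => if k ∈ S then 1 else star (u k) := by
      rw [diagonal_mul_diagonal]
      congr 1 with k
      split_ifs <;> simp [Complex.conj_mul', hu]
    rw [hUV, conjTranspose_mul, conjTranspose_mul, conjTranspose_conjTranspose,
      diagonal_conjTranspose, ← hdiag]
    simp only [Matrix.mul_assoc]
    rw [← Matrix.mul_assoc V, hVV, Matrix.one_mul]
  rw [hprod, absEigArgs_conjTranspose_mul_diagonal_mul hV]
  refine congrArg (Multiset.map · _) (funext fun k => ?_)
  split_ifs
  · simp
  · exact abs_arg_star (u k)

theorem card_filter_le_ite_mem {α : Type*} [LinearOrder α] {a : ι → α} {S : Finset ι}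
    (hS : ∀ i ∈ S, ∀ j ∉ S, a j ≤ a i) {b c : α} (hbc : b < c) :
    Finset.card {k | c ≤ if k ∈ S then b else a k} = Finset.card {k | c ≤ a k} - S.card := by
  have hfilter : Finset.filter (fun k => c ≤ if k ∈ S then b else a k) .univ =
      Finset.filter (fun k => c ≤ a k) .univ \ S := by
    ext k
    by_cases hk : k ∈ S <;> simp [hk, hbc]
  rw [hfilter]
  by_cases hsub : S ⊆ Finset.filter (fun k => c ≤ a k) .univ
  · exact Finset.card_sdiff_of_subset hsub
  · obtain ⟨i, hiS, hi⟩ := Finset.not_subset.mp hsub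
    have hle : ({k | c ≤ a k} : Finset ι) ⊆ S := fun j hj => by_contra fun hjS =>
      hi (by simpa using (Finset.mem_filter.mp hj).2.trans (hS i hiS j hjS))
    rw [Finset.sdiff_eq_empty_iff_subset.mpr hle, Finset.card_empty,
      Nat.sub_eq_zero_of_le (Finset.card_le_card hle)]

theorem countP_le_absEigArgs_truncation {U V : Matrix ι ι ℂ} {u : ι → ℂ}
    (hU : U ∈ unitaryGroup ι ℂ) (hV : V ∈ unitaryGroup ι ℂ) (hUV : U = Vᴴ * diagonal u * V)
    {S : Finset ι} (hS : ∀ i ∈ S, ∀ j ∉ S, |(u j).arg| ≤ |(u i).arg|) {c : ℝ} (hc : 0 < c) :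
    (absEigArgs (Uᴴ * (Vᴴ * diagonal (fun k => if k ∈ S then u k else 1) * V))).countP (c ≤ ·) =
      (absEigArgs U).countP (c ≤ ·) - S.card := by
  rw [absEigArgs_conjTranspose_mul_truncation hU hV hUV, hUV,
    absEigArgs_conjTranspose_mul_diagonal_mul hV, Multiset.countP_map, Multiset.countP_map]
  exact card_filter_le_ite_mem hS hc

theorem eigArg_abs_weak_submajorized_general {U Ur V : Matrix ι ι ℂ} {u : ι → ℂ}
    (hU : U ∈ unitaryGroup ι ℂ) (hUr : Ur ∈ unitaryGroup ι ℂ) (hV : V ∈ unitaryGroup ι ℂ)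
    (hUV : U = Vᴴ * diagonal u * V) {S : Finset ι}
    (hS : ∀ i ∈ S, ∀ j ∉ S, |(u j).arg| ≤ |(u i).arg|)
    (hcard : (Ur.charpoly.roots.filter (· ≠ 1)).card ≤ S.card) (m : ℕ) :
    sumLargest
        (absEigArgs (Uᴴ * (Vᴴ * diagonal (fun k => if k ∈ S then u k else 1) * V))) m ≤
      sumLargest (absEigArgs (Uᴴ * Ur)) m := by
  refine sumLargest_le_sumLargest_of_countP_le (by simp only [card_absEigArgs]) (fun c => ?_) m
  rcases le_or_gt c 0 with hc | hc
  · simp only [countP_le_absEigArgs_of_nonpos _ hc, le_refl]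
  have hcount := countP_le_absEigArgs_le hU hUr c
  rw [← Multiset.countP_eq_card_filter] at hcard
  rw [countP_le_absEigArgs_truncation hU hV hUV hS hc]
  lia

/-- weak submajorization of eigenvalue arguments for the phase truncation. -/
theorem eigArg_abs_weak_submajorized
    (hn : 1 ≤ n) (r : ℕ) (hr : r ≤ n)
    (U Ur V : Matrix (Fin n) (Fin n) ℂ) (θ : Fin n → ℝ)
    (hU : U ∈ Matrix.unitaryGroup (Fin n) ℂ)
    (hUr : Ur ∈ Matrix.unitaryGroup (Fin n) ℂ)
    (hUarg : ∀ z ∈ U.charpoly.roots, Complex.arg z ∈ Set.Ioo (-(Real.pi / 2)) (Real.pi / 2))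
    (hUrarg : ∀ z ∈ Ur.charpoly.roots, Complex.arg z ∈ Set.Ioo (-(Real.pi / 2)) (Real.pi / 2))
    (hcard : (Ur.charpoly.roots.filter (fun z => z ≠ 1)).card ≤ r)
    (hV : V ∈ Matrix.unitaryGroup (Fin n) ℂ)
    (hθsort : ∀ i j : Fin n, i ≤ j → |θ j| ≤ |θ i|)
    (hθrange : ∀ k, θ k ∈ Set.Ioo (-(Real.pi / 2)) (Real.pi / 2))
    (hUdiag : U = Vᴴ * phaseDiag θ * V)
    (Uhat : Matrix (Fin n) (Fin n) ℂ)
    (hUhat : Uhat = Vᴴ * Matrix.diagonal (fun k : Fin n =>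
      if (k : ℕ) < r then Complex.exp (Complex.I * (θ k : ℂ)) else 1) * V) :
    ∀ ℓ : ℕ, 1 ≤ ℓ → ℓ ≤ n →
      sumLargest (((Uᴴ * Uhat).charpoly.roots).map (fun z => |Complex.arg z|)) ℓ ≤
      sumLargest (((Uᴴ * Ur).charpoly.roots).map (fun z => |Complex.arg z|)) ℓ := by
  intro ℓ _ _
  subst hUhat
  have harg (k : Fin n) : (Complex.exp (Complex.I * (θ k : ℂ))).arg = θ k := by
    rw [mul_comm, Complex.arg_exp_mul_I, toIocMod_eq_self]
    constructor <;> linarith [(hθrange k).1, (hθrange k).2, Real.pi_pos]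
  let S : Finset (Fin n) := {k | (k : ℕ) < r}
  have hS : ∀ i ∈ S, ∀ j ∉ S, |θ j| ≤ |θ i| := fun i hi j hj =>
    hθsort i j <| Fin.le_def.mpr <| by
      simp only [S, Finset.mem_filter_univ] at hi hj
      lia
  have hScard : S.card = r := by simp [S, Fin.card_filter_val_lt, hr]
  simpa [S, absEigArgs] using eigArg_abs_weak_submajorized_general hU hUr hV hUdiag
    (S := S) (by simpa only [harg] using hS) (hScard ▸ hcard) ℓ

end LowPrank
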